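/- There exists a market with middlemen γ=(B,M,S,A,Â) whose associated game v_γ admits no middleman-optimal core allocation: specifically, for B={b₁,b₂}, M={1,2,3}, S={s₁,s₂}, with all direct-trade surpluses a_{ik}=0, and layer surplus matrices A^(1) with entries (rows b₁,b₂; columns s₁,s₂) equal to (2,0;0,0), A^(2)=(0,0;0,10), A^(3)=(0,2;4,0) (i.e. â_{ijk}=A^(j)_{ik}), there is no core allocation (x;y;z)∈Core(v_γ) at which every middleman attains her marginal contribution; in particular mc_1(v_γ)=2 and mc_2(v_γ)=6, yet y₁+y₂ ≤ 6 for every (x;y;z)∈Core(v_γ), so y₁=2 and y₂=6 cannot hold simultaneously. -/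

import Mathlib

/-!
Matching markets with middlemen (Atay, Bahel, Solymosi).

Players are of three sorts: buyers `B`, middlemen `M`, sellers `S`
(three disjoint nonempty finite types); the player set is `Player B M S = B ⊕ M ⊕ S`.
An (functional representation of a) `T`-matching assigns to each buyer either nothing
(the buyer is single), a seller (direct trade), or a middleman together with a seller
(mediated trade); distinct buyers get distinct sellers, and all agents involved lie in `T`.
A middleman may mediate several trades.
-/

open scoped Classical

noncomputable section

/-- The set of players of a market with middlemen: buyers `B`, middlemen `M`, sellers `S`. -/
abbrev Player (B M S : Type*) := B ⊕ M ⊕ S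

/-- Functional representation of a matching in the market with middlemen: each buyer is
unmatched (`none`), matched directly to a seller (`some (none, k)`), or matched to a seller
through a middleman (`some (some j, k)`). -/
abbrev MMatch (B M S : Type*) := B → Option (Option M × S)

namespace Middlemen

variable {B M S : Type*}

/-- A buyer as a player. -/
def buyer (i : B) : Player B M S := Sum.inl i

/-- A middleman as a player. -/
def mid (j : M) : Player B M S := Sum.inr (Sum.inl j)

/-- A seller as a player. -/
def seller (k : S) : Player B M S := Sum.inr (Sum.inr k)

/-- `f` is a `T`-matching in the market with middlemen: every basic coalition used by `f`
is contained in `T` and no seller is matched to two distinct buyers.  (Buyers, middlemen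
and sellers of `T` not appearing in any trade are singletons of the matching.) -/
def IsMatching (T : Finset (Player B M S)) (f : MMatch B M S) : Prop :=
  (∀ i o k, f i = some (o, k) →
      buyer i ∈ T ∧ seller k ∈ T ∧ ∀ j, o = some j → mid j ∈ T) ∧
  (∀ i i' o o' k, f i = some (o, k) → f i' = some (o', k) → i = i')

variable [Fintype B] [Fintype M] [Fintype S]

/-- The value `Σ_{(i,k)∈μ} a_{ik} + Σ_{(i,j,k)∈μ} â_{ijk}` of a matching in the market
with middlemen with direct-trade surplus matrix `A` and mediated-trade surpluses `Ah`. -/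
def mval (A : B → S → ℝ) (Ah : B → M → S → ℝ) (f : MMatch B M S) : ℝ :=
  ∑ i, (match f i with
    | none => 0
    | some (none, k) => A i k
    | some (some j, k) => Ah i j k)

/-- The TU game `v_γ` associated with the market with middlemen `γ = (B,M,S,A,Ah)`:
the worth of a coalition `T` is the maximal value of a `T`-matching. -/
def vGame (A : B → S → ℝ) (Ah : B → M → S → ℝ) (T : Finset (Player B M S)) : ℝ :=
  sSup { r | ∃ f : MMatch B M S, IsMatching T f ∧ r = mval A Ah f }

/-- `g` is a matching of the coalition `R` in a two-sided assignment market. -/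
def IsMatching2 (R : Finset (B ⊕ S)) (g : B → Option S) : Prop :=
  (∀ i k, g i = some k → Sum.inl i ∈ R ∧ Sum.inr k ∈ R) ∧
  (∀ i i' k, g i = some k → g i' = some k → i = i')

/-- The value of a two-sided matching with valuation matrix `As`. -/
def m2val (As : B → S → ℝ) (g : B → Option S) : ℝ :=
  ∑ i, (match g i with
    | none => 0
    | some k => As i k)

/-- The assignment game `w_{γ*}` of the two-sided assignment market `(B,S,As)`. -/
def wGame (As : B → S → ℝ) (R : Finset (B ⊕ S)) : ℝ :=
  sSup { r | ∃ g : B → Option S, IsMatching2 R g ∧ r = m2val As g }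

/-- The matrix `A*` of the associated two-sided assignment market:
`a*_{ik} = max_{j ∈ M} â_{ijk}`. -/
def Astar [Nonempty M] (Ah : B → M → S → ℝ) (i : B) (k : S) : ℝ :=
  Finset.univ.sup' Finset.univ_nonempty fun j => Ah i j k

/-- The two-sided matching `μ*` induced by a matching `μ` of the market with middlemen:
keep all matched buyer–seller pairs (dropping the middlemen). -/
def star (f : MMatch B M S) : B → Option S := fun i => (f i).map Prod.snd

/-- `m(i,k)`: the lowest-indexed middleman `j` maximizing `â_{ijk}`. -/
def bestMid [Nonempty M] [LinearOrder M] (Ah : B → M → S → ℝ) (i : B) (k : S) : M :=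
  (Finset.univ.filter fun j => ∀ j' : M, Ah i j' k ≤ Ah i j k).min' (by
    obtain ⟨j, -, hj⟩ := Finset.exists_max_image (Finset.univ : Finset M)
      (fun j => Ah i j k) Finset.univ_nonempty
    exact ⟨j, Finset.mem_filter.mpr ⟨Finset.mem_univ _, fun j' => hj j' (Finset.mem_univ _)⟩⟩)

/-- The matching `σ^△` of the market with middlemen induced by a two-sided matching `σ`:
each matched pair `{i,k}` of `σ` trades through the best middleman `m(i,k)`
(and every other middleman is a singleton). -/
def triangle [Nonempty M] [LinearOrder M] (Ah : B → M → S → ℝ) (g : B → Option S) :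
    MMatch B M S :=
  fun i => (g i).map fun k => (some (bestMid Ah i k), k)

/-- The core of a TU game on the finite player set `P`. -/
def core {P : Type*} [Fintype P] (v : Finset P → ℝ) : Set (P → ℝ) :=
  { x | ∑ t, x t = v Finset.univ ∧ ∀ T : Finset P, v T ≤ ∑ t ∈ T, x t }

/-- Augment a payoff vector of the two-sided market with zero payoffs to all middlemen. -/
def aug (xz : B ⊕ S → ℝ) : Player B M S → ℝ := fun t =>
  match t with
  | Sum.inl i => xz (Sum.inl i)
  | Sum.inr (Sum.inl _) => 0
  | Sum.inr (Sum.inr k) => xz (Sum.inr k)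

/-- Restrict a payoff vector of the market with middlemen to the buyers and sellers. -/
def restrictBS (X : Player B M S → ℝ) : B ⊕ S → ℝ := fun t =>
  match t with
  | Sum.inl i => X (buyer i)
  | Sum.inr k => X (seller k)

/-- The set `T ∩ (B ∪ S)` of buyers and sellers of a coalition `T`. -/
def bsPart (T : Finset (Player B M S)) : Finset (B ⊕ S) :=
  Finset.univ.filter fun t =>
    match t with
    | Sum.inl i => buyer i ∈ T
    | Sum.inr k => (seller k : Player B M S) ∈ T

/-- The coalition `R ∪ M` consisting of the buyers and sellers of `R` together with
all middlemen. -/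
def withAllMid (R : Finset (B ⊕ S)) : Finset (Player B M S) :=
  Finset.univ.filter fun t =>
    match t with
    | Sum.inl i => Sum.inl i ∈ R
    | Sum.inr (Sum.inl _) => True
    | Sum.inr (Sum.inr k) => Sum.inr k ∈ R

end Middlemen

namespace Middlemen

/-- The direct-trade surpluses of the counterexample: all zero. -/
def exA : Fin 2 → Fin 2 → ℝ := fun _ _ => 0

/-- The mediated-trade surpluses of the counterexample:
`A⁽¹⁾ = (2,0;0,0)`, `A⁽²⁾ = (0,0;0,10)`, `A⁽³⁾ = (0,2;4,0)`. -/
def exAh : Fin 2 → Fin 3 → Fin 2 → ℝ := fun i j k =>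
  ![(!![2, 0; 0, 0] : Matrix (Fin 2) (Fin 2) ℝ), !![0, 0; 0, 10], !![0, 2; 4, 0]] j i k

/-!
Once middleman `2` is gone, the best matching runs both trades through middleman `3`, so that
middleman `1` becomes worthless: removing both of them costs the market no more than removing
middleman `2` alone. In the core the members of a coalition jointly get at most what their departure
would cost, so middlemen `1` and `2` share at most `6`, although their marginal contributions are
`2` and `6`. (Middlemen `1`, `2`, `3` are the elements `0`, `1`, `2` of `Fin 3`.)

The worth of each coalition involved is bounded below by a matching and above by weak linear
programming duality, that is, by buyer and seller prices that cover every available trade.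
-/

section Core

variable {P : Type*} [Fintype P] [DecidableEq P]

theorem sum_le_sub_compl_of_mem_core {v : Finset P → ℝ} {x : P → ℝ} (hx : x ∈ core v)
    (T : Finset P) : ∑ t ∈ T, x t ≤ v Finset.univ - v Tᶜ := by
  obtain ⟨efficient, stable⟩ := hx
  linarith [Finset.sum_add_sum_compl T x, stable Tᶜ]

end Core

section Game

variable {B M S : Type*} {T : Finset (Player B M S)}

theorem IsMatching.eq_of_star_eq_some {f : MMatch B M S} (hf : IsMatching T f) (i i' : B) (k : S)
    (hi : star f i = some k) (hi' : star f i' = some k) : i = i' := by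
  simp only [star, Option.map_eq_some_iff, Prod.exists, exists_eq_right] at hi hi'
  obtain ⟨o, ho⟩ := hi
  obtain ⟨o', ho'⟩ := hi'
  exact hf.2 i i' o o' k ho ho'

variable [Fintype B] {A : B → S → ℝ} {Ah : B → M → S → ℝ}

theorem vGame_le {c : ℝ} (h : ∀ f, IsMatching T f → mval A Ah f ≤ c) : vGame A Ah T ≤ c := by
  refine csSup_le ⟨_, fun _ ↦ none, ⟨by simp, by simp⟩, rfl⟩ ?_
  rintro _ ⟨f, hf, rfl⟩
  exact h f hf

theorem mval_le_vGame [Finite M] [Finite S] {f : MMatch B M S} (hf : IsMatching T f) :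
    mval A Ah f ≤ vGame A Ah T := by
  refine le_csSup ((Set.finite_range (mval A Ah)).bddAbove.mono ?_) ⟨f, hf, rfl⟩
  rintro _ ⟨g, -, rfl⟩
  exact Set.mem_range_self g

theorem sum_mediated_le_vGame [Finite M] [Finite S] {m : B → M} {σ : B → S}
    (hσ : Function.Injective σ) (hB : ∀ i, buyer i ∈ T) (hM : ∀ i, mid (m i) ∈ T)
    (hS : ∀ i, seller (σ i) ∈ T) : ∑ i, Ah i (m i) (σ i) ≤ vGame A Ah T := by
  have isMatching : IsMatching T fun i ↦ some (some (m i), σ i) := by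
    refine ⟨?_, ?_⟩
    · rintro i _ _ ⟨⟩
      refine ⟨hB i, hS i, ?_⟩
      rintro _ ⟨⟩
      exact hM i
    · rintro i i' _ _ k hi hi'
      simp only [Option.some.injEq, Prod.mk.injEq] at hi hi'
      exact hσ (hi.2.trans hi'.2.symm)
  exact mval_le_vGame isMatching

end Game

section WeakDuality

variable {B M S : Type*} [Fintype B] [Fintype S]

theorem sum_option_elim_le_sum {R : Type*} [AddCommMonoid R] [PartialOrder R] [IsOrderedAddMonoid R]
    {g : B → Option S} (hg : ∀ i i' k, g i = some k → g i' = some k → i = i') {q : S → R}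
    (hq : ∀ k, 0 ≤ q k) : ∑ i, (g i).elim 0 q ≤ ∑ k, q k := by
  have fiber_le (k : S) : ∑ i, (if g i = some k then q k else 0) ≤ q k := by
    by_cases hk : ∃ i, g i = some k
    · obtain ⟨i, hi⟩ := hk
      rw [Fintype.sum_eq_single i fun i' hne ↦ if_neg fun hi' ↦ hne (hg i' i k hi' hi), if_pos hi]
    · rw [Fintype.sum_eq_zero _ fun i ↦ if_neg fun hi ↦ hk ⟨i, hi⟩]
      exact hq k
  calc ∑ i, (g i).elim 0 q = ∑ i, ∑ k, (if g i = some k then q k else 0) :=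
        Finset.sum_congr rfl fun i _ ↦ by cases g i <;> simp
    _ = ∑ k, ∑ i, (if g i = some k then q k else 0) := Finset.sum_comm
    _ ≤ ∑ k, q k := Finset.sum_le_sum fun k _ ↦ fiber_le k

theorem vGame_le_sum_prices {A : B → S → ℝ} {Ah : B → M → S → ℝ} {T : Finset (Player B M S)}
    {p : B → ℝ} {q : S → ℝ} (hp : ∀ i, 0 ≤ p i) (hq : ∀ k, 0 ≤ q k)
    (direct_le : ∀ i k, buyer i ∈ T → seller k ∈ T → A i k ≤ p i + q k)
    (mediated_le : ∀ i j k, buyer i ∈ T → mid j ∈ T → seller k ∈ T → Ah i j k ≤ p i + q k) :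
    vGame A Ah T ≤ ∑ i, p i + ∑ k, q k := by
  refine vGame_le fun f hf ↦ ?_
  calc mval A Ah f ≤ ∑ i, (p i + (star f i).elim 0 q) := by
        refine Finset.sum_le_sum fun i _ ↦ ?_
        rcases hi : f i with _ | ⟨_ | j, k⟩
        · simpa [star, hi] using hp i
        · obtain ⟨hB, hS, -⟩ := hf.1 i _ k hi
          simpa [star, hi] using direct_le i k hB hS
        · obtain ⟨hB, hS, hM⟩ := hf.1 i _ k hi
          simpa [star, hi] using mediated_le i j k hB (hM j rfl) hS
    _ = ∑ i, p i + ∑ i, (star f i).elim 0 q := Finset.sum_add_distrib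
    _ ≤ ∑ i, p i + ∑ k, q k := by grw [sum_option_elim_le_sum hf.eq_of_star_eq_some hq]

end WeakDuality

section Example

variable {T : Finset (Player (Fin 2) (Fin 3) (Fin 2))}

theorem vGame_exA_exAh_le_prices {p q : Fin 2 → ℝ} (hp : ∀ i, 0 ≤ p i) (hq : ∀ k, 0 ≤ q k)
    (hpq : ∀ i j k, mid j ∈ T → exAh i j k ≤ p i + q k) :
    vGame exA exAh T ≤ p 0 + p 1 + (q 0 + q 1) := by
  simpa only [Fin.sum_univ_two] using vGame_le_sum_prices (A := exA) hp hq
    (fun i k _ _ ↦ add_nonneg (hp i) (hq k)) (fun i j k _ hj _ ↦ hpq i j k hj)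

theorem mediated_le_vGame_exA_exAh (m : Fin 2 → Fin 3) (σ : Equiv.Perm (Fin 2))
    (hB : ∀ i, buyer i ∈ T) (hM : ∀ i, mid (m i) ∈ T) (hS : ∀ k, seller k ∈ T) :
    exAh 0 (m 0) (σ 0) + exAh 1 (m 1) (σ 1) ≤ vGame exA exAh T := by
  simpa only [Fin.sum_univ_two] using
    sum_mediated_le_vGame (A := exA) (Ah := exAh) σ.injective hB hM fun i ↦ hS (σ i)

theorem vGame_exA_exAh_univ : vGame exA exAh Finset.univ = 12 := by
  apply le_antisymm
  · calc vGame exA exAh Finset.univ ≤ 0 + 8 + (2 + 2) :=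
          vGame_exA_exAh_le_prices (p := ![0, 8]) (q := ![2, 2])
            (by simp [Fin.forall_fin_succ]) (by simp [Fin.forall_fin_succ])
            (by norm_num [Fin.forall_fin_succ, exAh])
      _ = 12 := by norm_num
  · calc (12 : ℝ) = 2 + 10 := by norm_num
      _ ≤ vGame exA exAh Finset.univ :=
          mediated_le_vGame_exA_exAh ![0, 1] 1 (by simp) (by simp) (by simp)

theorem vGame_exA_exAh_erase_mid_zero : vGame exA exAh (Finset.univ.erase (mid 0)) = 10 := by
  apply le_antisymm
  · calc vGame exA exAh (Finset.univ.erase (mid 0)) ≤ 0 + 8 + (0 + 2) :=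
          vGame_exA_exAh_le_prices (p := ![0, 8]) (q := ![0, 2])
            (by simp [Fin.forall_fin_succ]) (by simp [Fin.forall_fin_succ])
            (by norm_num [Fin.forall_fin_succ, exAh, mid])
      _ = 10 := by norm_num
  · calc (10 : ℝ) = 0 + 10 := by norm_num
      _ ≤ vGame exA exAh (Finset.univ.erase (mid 0)) :=
          mediated_le_vGame_exA_exAh ![1, 1] 1 (by simp [buyer, mid])
            (by simp [Fin.forall_fin_succ, mid]) (by simp [seller, mid])

theorem six_le_vGame_exA_exAh (hB : ∀ i, buyer i ∈ T) (hM : mid 2 ∈ T)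
    (hS : ∀ k, seller k ∈ T) : 6 ≤ vGame exA exAh T :=
  calc (6 : ℝ) = 2 + 4 := by norm_num
    _ ≤ vGame exA exAh T :=
        mediated_le_vGame_exA_exAh (fun _ ↦ 2) (Equiv.swap 0 1) hB (fun _ ↦ hM) hS

theorem vGame_exA_exAh_erase_mid_one : vGame exA exAh (Finset.univ.erase (mid 1)) = 6 := by
  apply le_antisymm
  · calc vGame exA exAh (Finset.univ.erase (mid 1)) ≤ 2 + 4 + (0 + 0) :=
          vGame_exA_exAh_le_prices (p := ![2, 4]) (q := ![0, 0])
            (by simp [Fin.forall_fin_succ]) (by simp [Fin.forall_fin_succ])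
            (by norm_num [Fin.forall_fin_succ, exAh, mid])
      _ = 6 := by norm_num
  · exact six_le_vGame_exA_exAh (by simp [buyer, mid]) (by simp [mid]) (by simp [seller, mid])

theorem mid_zero_add_mid_one_le_six_of_mem_core {X : Player (Fin 2) (Fin 3) (Fin 2) → ℝ}
    (hX : X ∈ core (vGame exA exAh)) : X (mid 0) + X (mid 1) ≤ 6 := by
  have joint_le := sum_le_sub_compl_of_mem_core hX {mid 0, mid 1}
  rw [Finset.sum_pair (by simp [mid]), vGame_exA_exAh_univ] at joint_le
  have rest_ge : 6 ≤ vGame exA exAh {mid 0, mid 1}ᶜ :=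
    six_le_vGame_exA_exAh (by simp [buyer, mid]) (by simp [mid]) (by simp [seller, mid])
  linarith

end Example

/-- in the market with middlemen with `B = {b₁,b₂}`, `M = {1,2,3}`,
`S = {s₁,s₂}`, zero direct-trade surpluses and the layer matrices above, there is no
middleman-optimal core allocation: `mc₁ = 2` and `mc₂ = 6`, but `y₁ + y₂ ≤ 6` for every
core allocation, so no core allocation gives every middleman her marginal contribution. -/
theorem no_middleman_optimal_core_allocation :
    vGame exA exAh Finset.univ -
        vGame exA exAh (Finset.univ.erase (mid (0 : Fin 3))) = 2 ∧
    vGame exA exAh Finset.univ -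
        vGame exA exAh (Finset.univ.erase (mid (1 : Fin 3))) = 6 ∧
    (∀ X ∈ core (vGame exA exAh),
        X (mid (0 : Fin 3)) + X (mid (1 : Fin 3)) ≤ 6) ∧
    ¬ ∃ X ∈ core (vGame exA exAh), ∀ j : Fin 3,
        X (mid j) = vGame exA exAh Finset.univ -
          vGame exA exAh (Finset.univ.erase (mid j)) := by
  have mc_zero : vGame exA exAh Finset.univ - vGame exA exAh (Finset.univ.erase (mid 0)) = 2 := by
    rw [vGame_exA_exAh_univ, vGame_exA_exAh_erase_mid_zero]
    norm_num
  have mc_one : vGame exA exAh Finset.univ - vGame exA exAh (Finset.univ.erase (mid 1)) = 6 := by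
    rw [vGame_exA_exAh_univ, vGame_exA_exAh_erase_mid_one]
    norm_num
  refine ⟨mc_zero, mc_one, fun X hX ↦ mid_zero_add_mid_one_le_six_of_mem_core hX, ?_⟩
  rintro ⟨X, hX, optimal⟩
  linarith [mid_zero_add_mid_one_le_six_of_mem_core hX, optimal 0, optimal 1]

end Middlemen
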